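/- arXiv:2008.13424 — 2 statements merged into one kernel-verified Lean document; each statement's English description precedes it below -/
import Mathlib

section
/- Let M̄ be a real-valued random variable with M̄ > 0 almost surely and with E[exp(M̄)] < ∞ and E[exp(−M̄)] < ∞ (both positive). Let ε, η ∈ (0, 1), let d ≥ 1 be an integer, and let h, i, k, n be positive reals; set r = n/k and R = i/h. Suppose r ≥ R^{−1/d} (1 + ε)^{−2/d} log((2/η) E[exp(M̄)]) and r ≤ −R^{−1/d} (1 − ε)^{−2/d} log((2/η) E[exp(−M̄)]). Then P( |√((k M̄ / n)^d · (h / i)) − 1| ≥ ε ) ≤ η. -/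
open MeasureTheory ProbabilityTheory

/-! With `c s = R ^ (-1/p) * s ^ (-2/p)`, the ratio `√((x / r) ^ p / R)` is at least `s` exactly
when `r ≤ c s * x`, and at most `s` exactly when `c s * x ≤ r`. The bounds on `r` therefore turn the
upper deviation `s = 1 + ε` into `log (E[exp X] / (η / 2)) ≤ X` and the lower deviation `s = 1 - ε`
into the same event for `-X`. By Markov's inequality for `exp X` and `exp (-X)`, each has measure at
most `η / 2`. -/

section Tail

variable {Ω : Type*} {mΩ : MeasurableSpace Ω} {μ : Measure Ω} {X : Ω → ℝ}

theorem measure_ge_log_integral_exp_div_le (hX : Integrable (fun ω => Real.exp (X ω)) μ)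
    {δ : ℝ} (hδ : 0 < δ) :
    μ {ω | Real.log ((∫ ω, Real.exp (X ω) ∂μ) / δ) ≤ X ω} ≤ ENNReal.ofReal δ := by
  rcases eq_zero_or_neZero μ with rfl | _
  · simp
  set I := ∫ ω, Real.exp (X ω) ∂μ
  have hI : 0 < I := integral_exp_pos hX
  have hIδ : 0 < I / δ := div_pos hI hδ
  simp only [Real.log_le_iff_le_exp hIδ]
  have markov : I / δ * μ.real {ω | I / δ ≤ Real.exp (X ω)} ≤ I :=
    mul_meas_ge_le_integral_of_nonneg (.of_forall fun ω => (Real.exp_pos (X ω)).le) hX (I / δ)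
  rw [← ENNReal.ofReal_toReal (hX.measure_ge_lt_top hIδ).ne]
  apply ENNReal.ofReal_le_ofReal
  rwa [← le_div_iff₀' hIδ, div_div_cancel₀ hI.ne'] at markov

end Tail

section VolumeRatio

variable {p r R s x : ℝ}

theorem inv_mul_rpow_neg_div_rpow (hp : p ≠ 0) (hR : 0 < R) (hs : 0 < s) :
    (R ^ (-1 / p) * s ^ (-2 / p))⁻¹ ^ p = R * s ^ 2 := by
  rw [mul_inv, neg_div, neg_div, ← Real.rpow_neg hR.le, ← Real.rpow_neg hs.le, neg_neg, neg_neg,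
    Real.mul_rpow (by positivity) (by positivity), ← Real.rpow_mul hR.le, ← Real.rpow_mul hs.le,
    div_mul_cancel₀ _ hp, div_mul_cancel₀ _ hp, Real.rpow_one, Real.rpow_two]

theorem le_sqrt_rpow_div_iff (hp : 0 < p) (hr : 0 < r) (hR : 0 < R) (hs : 0 < s) (hx : 0 ≤ x) :
    s ≤ √((x / r) ^ p / R) ↔ r ≤ R ^ (-1 / p) * s ^ (-2 / p) * x := by
  rw [Real.le_sqrt' hs, le_div_iff₀' hR, ← inv_mul_rpow_neg_div_rpow hp.ne' hR hs,
    Real.rpow_le_rpow_iff (by positivity) (by positivity) hp, le_div_iff₀ hr,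
    inv_mul_le_iff₀ (by positivity)]

theorem sqrt_rpow_div_le_iff (hp : 0 < p) (hr : 0 < r) (hR : 0 < R) (hs : 0 < s) (hx : 0 ≤ x) :
    √((x / r) ^ p / R) ≤ s ↔ R ^ (-1 / p) * s ^ (-2 / p) * x ≤ r := by
  rw [Real.sqrt_le_left hs.le, div_le_iff₀' hR, ← inv_mul_rpow_neg_div_rpow hp.ne' hR hs,
    Real.rpow_le_rpow_iff (by positivity) (by positivity) hp, div_le_iff₀ hr,
    le_inv_mul_iff₀ (by positivity)]

end VolumeRatio

theorem netflow_relative_efficiency_bound_general {Ω : Type*} {mΩ : MeasurableSpace Ω}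
    {μ : Measure Ω} {X : Ω → ℝ} (hX : ∀ᵐ ω ∂μ, 0 ≤ X ω)
    (hint : Integrable (fun ω => Real.exp (X ω)) μ)
    (hint_neg : Integrable (fun ω => Real.exp (-X ω)) μ)
    {ε η p r R : ℝ} (hε : ε ∈ Set.Ioo 0 1) (hη : 0 < η) (hp : 0 < p) (hr : 0 < r) (hR : 0 < R)
    (hlow : R ^ (-1 / p) * (1 + ε) ^ (-2 / p) *
      Real.log (2 / η * ∫ ω, Real.exp (X ω) ∂μ) ≤ r)
    (hup : r ≤ -(R ^ (-1 / p) * (1 - ε) ^ (-2 / p) *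
      Real.log (2 / η * ∫ ω, Real.exp (-X ω) ∂μ))) :
    μ {ω | ε ≤ |√((X ω / r) ^ p / R) - 1|} ≤ ENNReal.ofReal η := by
  have hadd : 0 < 1 + ε := by linarith [hε.1]
  have hsub : 0 < 1 - ε := by linarith [hε.2]
  have log_arg (I : ℝ) : 2 / η * I = I / (η / 2) := by field_simp
  rw [log_arg] at hlow hup
  rw [← mul_neg] at hup
  set upper := {ω | Real.log ((∫ ω, Real.exp (X ω) ∂μ) / (η / 2)) ≤ X ω}
  set lower := {ω | Real.log ((∫ ω, Real.exp (-X ω) ∂μ) / (η / 2)) ≤ -X ω}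
  have deviation_subset : {ω | ε ≤ |√((X ω / r) ^ p / R) - 1|} ≤ᵐ[μ]
      (upper ∪ lower : Set Ω) := by
    filter_upwards [hX] with ω hω hdev
    refine (le_abs'.1 hdev).symm.imp (fun hge => ?_) fun hle => ?_
    · rw [le_sub_iff_add_le', le_sqrt_rpow_div_iff hp hr hR hadd hω] at hge
      exact le_of_mul_le_mul_left (hlow.trans hge) (by positivity)
    · rw [sub_le_iff_le_add', ← sub_eq_add_neg, sqrt_rpow_div_le_iff hp hr hR hsub hω] at hle
      exact le_neg.2 (le_of_mul_le_mul_left (hle.trans hup) (by positivity))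
  calc μ {ω | ε ≤ |√((X ω / r) ^ p / R) - 1|}
      ≤ μ upper + μ lower := (measure_mono_ae deviation_subset).trans (measure_union_le _ _)
    _ ≤ ENNReal.ofReal (η / 2) + ENNReal.ofReal (η / 2) :=
        add_le_add (measure_ge_log_integral_exp_div_le hint (half_pos hη))
          (measure_ge_log_integral_exp_div_le hint_neg (half_pos hη))
    _ = ENNReal.ofReal η := by
        rw [← ENNReal.ofReal_add (half_pos hη).le (half_pos hη).le, add_halves]

/-- Proposition 5 of the paper in scalar form: if the ratio `r = n/k` of the number of
NetFlows to the number of complete flows lies between the stated lower and upper bounds,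
then the ratio of confidence-ellipsoid volumes `√((k M̄/n)^d (h/i))` deviates from `1` by at
least `ε` with probability at most `η`. -/
theorem netflow_relative_efficiency_bound {Ω : Type*} [MeasureSpace Ω]
    [IsProbabilityMeasure (ℙ : Measure Ω)]
    (M : Ω → ℝ) (hMmeas : Measurable M) (hMpos : ∀ᵐ ω ∂ℙ, 0 < M ω)
    (hInt₁ : Integrable (fun ω => Real.exp (M ω)) ℙ)
    (hInt₂ : Integrable (fun ω => Real.exp (-(M ω))) ℙ)
    (hpos₁ : 0 < ∫ ω, Real.exp (M ω) ∂ℙ)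
    (hpos₂ : 0 < ∫ ω, Real.exp (-(M ω)) ∂ℙ)
    (ε η : ℝ) (hε : ε ∈ Set.Ioo (0 : ℝ) 1) (hη : η ∈ Set.Ioo (0 : ℝ) 1)
    (d : ℕ) (hd : 1 ≤ d)
    (h i k n : ℝ) (hh : 0 < h) (hi : 0 < i) (hk : 0 < k) (hn : 0 < n)
    (r R : ℝ) (hr : r = n / k) (hR : R = i / h)
    (hlow : R ^ (-(1 : ℝ) / d) * (1 + ε) ^ (-(2 : ℝ) / d) *
        Real.log ((2 / η) * ∫ ω, Real.exp (M ω) ∂ℙ) ≤ r)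
    (hup : r ≤ -(R ^ (-(1 : ℝ) / d) * (1 - ε) ^ (-(2 : ℝ) / d) *
        Real.log ((2 / η) * ∫ ω, Real.exp (-(M ω)) ∂ℙ))) :
    ℙ {ω : Ω | ε ≤ |Real.sqrt ((k * M ω / n) ^ d * (h / i)) - 1|} ≤ ENNReal.ofReal η := by
  subst hr hR
  have key := netflow_relative_efficiency_bound_general (hMpos.mono fun _ => le_of_lt) hInt₁ hInt₂
    hε hη.1 (Nat.cast_pos.2 hd) (div_pos hn hk) (div_pos hi hh) hlow hup
  simpa only [Real.rpow_natCast, div_div_eq_mul_div, mul_comm k, mul_div_assoc] using key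
end

section
/- Let d ≥ 1 be an integer, ε ∈ (0, 1), η ∈ (0, 1), R > 0, a > 0, b > 0, and set A = ((1 + ε)/(1 − ε))^{2/d}. Define L = R^{−1/d} (1 + ε)^{−2/d} log((2/η) a) and U = −R^{−1/d} (1 − ε)^{−2/d} log((2/η) b). Then L < U if and only if a · b^A < (η/2)^{A+1}. -/
/-!
The coefficients of the two logarithms in `L` and `-U` have ratio `A`. Dividing `L < U` by the
coefficient in `L` and writing `t = η / 2` leaves `log (a / t) + A * log (b / t) < 0`, which is the
logarithm of `(a / t) * (b / t) ^ A < 1`.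
-/

section

open Real

variable {a b t : ℝ}

theorem log_inv_mul_lt_neg_mul_log_inv_mul_iff (A : ℝ) (ha : 0 < a) (hb : 0 < b) (ht : 0 < t) :
    log (t⁻¹ * a) < -(A * log (t⁻¹ * b)) ↔ a * b ^ A < t ^ (A + 1) := by
  have hbA : 0 < b ^ A := rpow_pos_of_pos hb A
  calc log (t⁻¹ * a) < -(A * log (t⁻¹ * b))
    _ ↔ log a + A * log b < (A + 1) * log t := by
      rw [log_mul (inv_ne_zero ht.ne') ha.ne', log_mul (inv_ne_zero ht.ne') hb.ne', log_inv]
      constructor <;> intro h <;> linarith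
    _ ↔ log (a * b ^ A) < log (t ^ (A + 1)) := by
      rw [log_mul ha.ne' hbA.ne', log_rpow hb, log_rpow ht]
    _ ↔ a * b ^ A < t ^ (A + 1) :=
      log_lt_log_iff (mul_pos ha hbA) (rpow_pos_of_pos ht _)

theorem mul_log_inv_mul_lt_neg_mul_log_inv_mul_iff {p : ℝ} (q : ℝ) (hp : 0 < p)
    (ha : 0 < a) (hb : 0 < b) (ht : 0 < t) :
    p * log (t⁻¹ * a) < -(q * log (t⁻¹ * b)) ↔ a * b ^ (q / p) < t ^ (q / p + 1) := by
  have factor_p : -(q * log (t⁻¹ * b)) = p * -(q / p * log (t⁻¹ * b)) := by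
    field_simp
  rw [factor_p, mul_lt_mul_iff_right₀ hp, log_inv_mul_lt_neg_mul_log_inv_mul_iff _ ha hb ht]

theorem mul_rpow_neg_div_mul_rpow_neg {c x y : ℝ} (s : ℝ) (hc : c ≠ 0) (hx : 0 ≤ x)
    (hy : 0 ≤ y) : c * y ^ (-s) / (c * x ^ (-s)) = (x / y) ^ s := by
  rw [mul_div_mul_left _ _ hc, rpow_neg hx, rpow_neg hy, inv_div_inv, div_rpow hx hy]

-- In the paper's notation `c = R ^ (-1 / d)`, `s = 2 / d`, `x = 1 + ε`, `y = 1 - ε`, `t = η / 2`.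
theorem netflow_bounds_nonempty_iff_general {c x y : ℝ} (s : ℝ) (hc : 0 < c) (hx : 0 < x)
    (hy : 0 < y) (ha : 0 < a) (hb : 0 < b) (ht : 0 < t) :
    c * x ^ (-s) * log (t⁻¹ * a) < -(c * y ^ (-s) * log (t⁻¹ * b)) ↔
      a * b ^ ((x / y) ^ s) < t ^ ((x / y) ^ s + 1) := by
  rw [mul_log_inv_mul_lt_neg_mul_log_inv_mul_iff _ (mul_pos hc (rpow_pos_of_pos hx _)) ha hb ht,
    mul_rpow_neg_div_mul_rpow_neg s hc.ne' hx.le hy.le]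

end

/-- With `A = ((1+ε)/(1−ε))^{2/d}`, `L = R^{−1/d}(1+ε)^{−2/d} log((2/η)a)` and
`U = −R^{−1/d}(1−ε)^{−2/d} log((2/η)b)`, the admissible interval `(L, U)` is nonempty,
i.e. `L < U`, if and only if `a · b^A < (η/2)^{A+1}`. -/
theorem netflow_bounds_nonempty_iff (d : ℕ) (hd : 1 ≤ d)
    (ε η R a b : ℝ) (hε : ε ∈ Set.Ioo (0 : ℝ) 1) (hη : η ∈ Set.Ioo (0 : ℝ) 1)
    (hR : 0 < R) (ha : 0 < a) (hb : 0 < b)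
    (A L U : ℝ)
    (hA : A = ((1 + ε) / (1 - ε)) ^ ((2 : ℝ) / d))
    (hL : L = R ^ (-(1 : ℝ) / d) * (1 + ε) ^ (-(2 : ℝ) / d) * Real.log ((2 / η) * a))
    (hU : U = -(R ^ (-(1 : ℝ) / d) * (1 - ε) ^ (-(2 : ℝ) / d) * Real.log ((2 / η) * b))) :
    L < U ↔ a * b ^ A < (η / 2) ^ (A + 1) := by
  subst hA hL hU
  simpa only [neg_div, inv_div] using
    netflow_bounds_nonempty_iff_general (2 / d) (Real.rpow_pos_of_pos hR (-1 / d))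
      (by linarith [hε.1] : 0 < 1 + ε) (sub_pos.mpr hε.2) ha hb (half_pos hη.1)
end
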